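/- Let n ≥ 2, d ≥ 1 be integers and suppose the n-adic grids 𝒢_1 = 𝒢(δ_1, ℒ_{𝐚_1}), …, 𝒢_{d+1} = 𝒢(δ_{d+1}, ℒ_{𝐚_{d+1}}) in ℝ^d are adjacent. Let 𝒢(δ'_1, ℒ_{𝐚'_1}), …, 𝒢(δ'_{d+1}, ℒ_{𝐚'_{d+1}}) be any other representations of 𝒢_1, …, 𝒢_{d+1} respectively. For k_1 ≠ k_2 in {1,…,d+1} and s ∈ {1,…,d} set D_1(k_1,k_2,s) := liminf_{j→∞} |([ℒ_{𝐚_{k_1}}(j)]_s − [ℒ_{𝐚_{k_2}}(j)]_s)/n^j|, D_2(k_1,k_2,s) := limsup_{j→∞} |([ℒ_{𝐚_{k_1}}(j)]_s − [ℒ_{𝐚_{k_2}}(j)]_s)/n^j|, and define D'_1(k_1,k_2,s), D'_2(k_1,k_2,s) analogously from the primed representations. Then for each such k_1, k_2, s, either D'_1(k_1,k_2,s) = D_1(k_1,k_2,s) and D'_2(k_1,k_2,s) = D_2(k_1,k_2,s), or D'_1(k_1,k_2,s) = 1 − D_2(k_1,k_2,s) and D'_2(k_1,k_2,s) = 1 −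 D_1(k_1,k_2,s). -/

import Mathlib

/-!
Two representations of one grid have, at each generation `n ^ j`, corners that differ by a multiple
of `n ^ j` (`gridRep_eq_congr`). Hence in each coordinate `L'(j) = L(j) + c + n ^ j * e j` with a
fixed integer `c` and integers `e j`, where `0 ≤ L(j), L'(j) < n ^ j`. Once `|c| < n ^ j` this forces
`e j ∈ {-1, 0, 1}`; the value `0` persists because both sequences are built from digits, and
otherwise the sign of `e j` is opposite to that of `c`. So for `u j = L(j) / n ^ j` and
`u' j = L'(j) / n ^ j` in `[0, 1)`, either `u' - u → 0`, or `u → 0` and `u' → 1`, or `u → 1` and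
`u' → 0` (`locFun_trichotomy`).

For two grids with normalised locations `u, v`, write `f = |u - v|` and `f' = |u' - v'|`. If both
`u` and `v` are in the first case, or neither is, then `f' - f → 0` and the liminf and limsup are
unchanged. If exactly one of them is, then `f' - (1 - f) → 0`, which exchanges `(D₁, D₂)` with
`(1 - D₂, 1 - D₁)`.
-/

open scoped BigOperators

/-- The half-open cube `[x₁, x₁+ℓ) × ⋯ × [x_d, x_d+ℓ)` in `ℝ^d`. -/
def HalfOpenCube (d : ℕ) (x : Fin d → ℝ) (ℓ : ℝ) : Set (Fin d → ℝ) :=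
  {y | ∀ i, x i ≤ y i ∧ y i < x i + ℓ}

/-- `G` is an `n`-adic grid in `ℝ^d`. -/
def IsNAdicGrid (n d : ℕ) (G : Set (Set (Fin d → ℝ))) : Prop :=
  (∀ Q ∈ G, ∃ (x : Fin d → ℝ) (k : ℤ), Q = HalfOpenCube d x ((n : ℝ) ^ k)) ∧
  (∀ Q ∈ G, ∀ R ∈ G, Q ∩ R = Q ∨ Q ∩ R = R ∨ Q ∩ R = ∅) ∧
  (∀ k : ℤ, ∀ y : Fin d → ℝ,
    ∃! Q, Q ∈ G ∧ (∃ x : Fin d → ℝ, Q = HalfOpenCube d x ((n : ℝ) ^ k)) ∧ y ∈ Q)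

/-- A family of `N` `n`-adic grids in `ℝ^d` is adjacent: there is a constant `C > 0` such
that every half-open cube is contained in some cube of one of the grids whose sidelength
is at most `C` times its own. -/
def IsAdjacentFamily (n d N : ℕ) (G : Fin N → Set (Set (Fin d → ℝ))) : Prop :=
  ∃ C > (0 : ℝ), ∀ (x : Fin d → ℝ) (ℓ : ℝ), 0 < ℓ →
    ∃ (i : Fin N) (R : Set (Fin d → ℝ)), R ∈ G i ∧ HalfOpenCube d x ℓ ⊆ R ∧
      ∃ (y : Fin d → ℝ) (s : ℝ), R = HalfOpenCube d y s ∧ s ≤ C * ℓ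

/-- The location function `ℒ_𝐚(j) = Σ_{k<j} n^k a_k` associated to a digit-vector sequence. -/
def locFun (n d : ℕ) (a : ℕ → Fin d → ℕ) (j : ℕ) (i : Fin d) : ℤ :=
  ∑ k ∈ Finset.range j, (n : ℤ) ^ k * (a k i : ℤ)

/-- The `n`-adic grid `𝒢(δ, ℒ_𝐚)`: for `m ≥ 0` the `m`-th generation consists of the cubes
`δ + n^{-m}(k + [0,1)^d)`, and for `m = -j < 0` of the cubes `δ + ℒ_𝐚(j) + n^{j}(k + [0,1)^d)`. -/
def GridRep (n d : ℕ) (δ : Fin d → ℝ) (a : ℕ → Fin d → ℕ) : Set (Set (Fin d → ℝ)) :=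
  {Q | (∃ (m : ℕ) (k : Fin d → ℤ),
          Q = HalfOpenCube d (fun i => δ i + (k i) * (n : ℝ) ^ (-(m : ℤ))) ((n : ℝ) ^ (-(m : ℤ)))) ∨
       (∃ (j : ℕ) (k : Fin d → ℤ), 0 < j ∧
          Q = HalfOpenCube d (fun i => δ i + (locFun n d a j i : ℝ) + (k i) * (n : ℝ) ^ (j : ℕ))
              ((n : ℝ) ^ (j : ℕ)))}

/-- A real number `δ` is `n`-far: `|δ - k/n^m| ≥ C/n^m` for all `m ≥ 0`, `k ∈ ℤ`. -/
def IsNFar (n : ℕ) (δ : ℝ) : Prop :=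
  ∃ C > (0 : ℝ), ∀ (m : ℕ) (k : ℤ), C / (n : ℝ) ^ m ≤ |δ - (k : ℝ) / (n : ℝ) ^ m|

open Filter Topology

/-! ### Comparing the generations of two representations -/

lemma halfOpenCube_injective {d : ℕ} (hd : 1 ≤ d) {x y : Fin d → ℝ} {ℓ m : ℝ} (hℓ : 0 < ℓ)
    (hm : 0 < m) (h : HalfOpenCube d x ℓ = HalfOpenCube d y m) : x = y ∧ ℓ = m := by
  have hx : x ∈ HalfOpenCube d y m := h ▸ (fun i => ⟨le_rfl, by linarith⟩)
  have hy : y ∈ HalfOpenCube d x ℓ := h ▸ (fun i => ⟨le_rfl, by linarith⟩)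
  have hxy : x = y := funext fun i => le_antisymm (hy i).1 (hx i).1
  subst hxy
  refine ⟨rfl, ?_⟩
  -- If one side were shorter, the corner opposite to `x` in the shorter cube, which that cube
  -- omits, would lie in the longer one.
  have key : ∀ p q : ℝ, 0 < p → HalfOpenCube d x p = HalfOpenCube d x q → q ≤ p := by
    intro p q hp h
    by_contra! hlt
    have h1 : (fun i => x i + p) ∈ HalfOpenCube d x p :=
      h ▸ (fun i => ⟨by linarith, by linarith⟩)
    exact lt_irrefl _ (h1 ⟨0, hd⟩).2
  exact le_antisymm (key m ℓ hm h.symm) (key ℓ m hℓ h)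

/-- If two pairs represent the same grid, their generations of sidelength `n ^ j` have the same
corners, so the chosen corners agree modulo `n ^ j`. -/
lemma gridRep_eq_congr {n d : ℕ} (hn : 2 ≤ n) (hd : 1 ≤ d) {δ δ' : Fin d → ℝ}
    {a a' : ℕ → Fin d → ℕ} (h : GridRep n d δ' a' = GridRep n d δ a) (j : ℕ) (s : Fin d) :
    ∃ e : ℤ, δ' s + (locFun n d a' j s : ℝ) = δ s + (locFun n d a j s : ℝ) + e * (n : ℝ) ^ j := by
  have hn1 : (1 : ℝ) < n := by exact_mod_cast hn
  have hn0 : (0 : ℝ) < n := by linarith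
  have hmem : HalfOpenCube d (fun i => δ' i + (locFun n d a' j i : ℝ)) ((n : ℝ) ^ j) ∈
      GridRep n d δ' a' := by
    rcases Nat.eq_zero_or_pos j with rfl | hj
    · exact Or.inl ⟨0, 0, by simp [locFun]⟩
    · exact Or.inr ⟨j, 0, hj, by simp⟩
  rw [h] at hmem
  rcases hmem with ⟨m, k, hk⟩ | ⟨m, k, -, hk⟩
  · obtain ⟨hx, hℓ⟩ := halfOpenCube_injective hd (by positivity) (by positivity) hk
    rw [← zpow_natCast] at hℓ
    -- Equal sidelengths `n ^ j = n ^ (-m)` force `j = m = 0`.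
    have hjm := zpow_right_injective₀ hn0 hn1.ne' hℓ
    obtain ⟨rfl, rfl⟩ : j = 0 ∧ m = 0 := by omega
    exact ⟨k s, by simpa [locFun] using congrFun hx s⟩
  · obtain ⟨hx, hℓ⟩ := halfOpenCube_injective hd (by positivity) (by positivity) hk
    have hjm := pow_right_injective₀ hn0 hn1.ne' hℓ
    subst hjm
    exact ⟨k s, congrFun hx s⟩

/-! ### Location functions that agree up to a constant modulo `n ^ j` -/

lemma locFun_succ (n d : ℕ) (a : ℕ → Fin d → ℕ) (j : ℕ) (s : Fin d) :
    locFun n d a (j + 1) s = locFun n d a j s + (n : ℤ) ^ j * a j s := by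
  simp [locFun, Finset.sum_range_succ]

lemma locFun_nonneg (n d : ℕ) (a : ℕ → Fin d → ℕ) (j : ℕ) (s : Fin d) :
    0 ≤ locFun n d a j s :=
  Finset.sum_nonneg fun _ _ => by positivity

lemma locFun_lt {n d : ℕ} {a : ℕ → Fin d → ℕ} {s : Fin d} (ha : ∀ j, a j s < n) (j : ℕ) :
    locFun n d a j s < (n : ℤ) ^ j := by
  induction j with
  | zero => simp [locFun]
  | succ j ih =>
    rw [locFun_succ, pow_succ]
    have h1 : (a j s : ℤ) + 1 ≤ n := by exact_mod_cast ha j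
    have h2 : (0 : ℤ) ≤ (n : ℤ) ^ j := by positivity
    nlinarith

/-- The carry in `L'(j) = L(j) + c + n ^ j * e j` is eventually constant, with value `0`, `1` or
`-1`. -/
lemma carry_eventually_const {n d : ℕ} (hn : 2 ≤ n) {a a' : ℕ → Fin d → ℕ} {s : Fin d}
    (ha : ∀ j, a j s < n) (ha' : ∀ j, a' j s < n) (c : ℤ)
    (h : ∀ j, ∃ e : ℤ, locFun n d a' j s = locFun n d a j s + c + e * (n : ℤ) ^ j) :
    (∀ᶠ j in atTop, locFun n d a' j s = locFun n d a j s + c) ∨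
    (∀ᶠ j in atTop, locFun n d a' j s = locFun n d a j s + c + (n : ℤ) ^ j) ∨
    (∀ᶠ j in atTop, locFun n d a' j s = locFun n d a j s + c - (n : ℤ) ^ j) := by
  by_cases hex : ∃ j, locFun n d a' j s = locFun n d a j s + c
  · left
    obtain ⟨j₀, hj₀⟩ := hex
    filter_upwards [eventually_ge_atTop j₀] with j hj
    induction j, hj using Nat.le_induction with
    | base => exact hj₀
    | succ j _ ih =>
      obtain ⟨e, he⟩ := h (j + 1)
      have hpos : (0 : ℤ) < (n : ℤ) ^ j := by positivity
      -- The digits satisfy `a' j - a j = e * n` with `|a' j - a j| < n`, so there is no new carry.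
      have hdig : (a' j s : ℤ) - a j s = e * n := by
        rw [locFun_succ, locFun_succ, ih, pow_succ] at he
        apply mul_left_cancel₀ hpos.ne'
        linarith
      have h1 : (a j s : ℤ) < n := by exact_mod_cast ha j
      have h2 : (a' j s : ℤ) < n := by exact_mod_cast ha' j
      have he0 : e = 0 := by
        have : e < 1 := by by_contra! hc; nlinarith
        have : -1 < e := by by_contra! hc; nlinarith
        omega
      rw [he, he0]; ring
  · right
    push Not at hex
    have hbig : ∀ᶠ j in atTop, |c| < (n : ℤ) ^ j := by
      filter_upwards [eventually_ge_atTop c.natAbs] with j hj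
      have h1 : j < n ^ j := Nat.lt_pow_self hn
      have h2 : c.natAbs < n ^ j := by omega
      rw [Int.abs_eq_natAbs]
      exact_mod_cast h2
    rcases le_or_gt c 0 with hc | hc
    · left
      filter_upwards [hbig] with j hj
      obtain ⟨e, he⟩ := h j
      have hne := hex j
      have := locFun_nonneg n d a j s
      have := locFun_nonneg n d a' j s
      have := locFun_lt ha j
      have := locFun_lt ha' j
      have := abs_lt.1 hj
      have he1 : e = 1 := by
        have : e ≠ 0 := by rintro rfl; apply hne; simpa using he
        have : e < 2 := by by_contra! hc; nlinarith
        have : -1 < e := by by_contra! hc; nlinarith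
        omega
      rw [he, he1]; ring
    · right
      filter_upwards [hbig] with j hj
      obtain ⟨e, he⟩ := h j
      have hne := hex j
      have := locFun_nonneg n d a j s
      have := locFun_nonneg n d a' j s
      have := locFun_lt ha j
      have := locFun_lt ha' j
      have := abs_lt.1 hj
      have he1 : e = -1 := by
        have : e ≠ 0 := by rintro rfl; apply hne; simpa using he
        have : e < 1 := by by_contra! hc; nlinarith
        have : -2 < e := by by_contra! hc; nlinarith
        omega
      rw [he, he1]; ring

/-- The location function in coordinate `s`, normalised to `[0, 1)`. -/
noncomputable def normLoc (n d : ℕ) (a : ℕ → Fin d → ℕ) (s : Fin d) (j : ℕ) : ℝ :=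
  (locFun n d a j s : ℝ) / (n : ℝ) ^ j

lemma normLoc_mem {n d : ℕ} (hn : 2 ≤ n) {a : ℕ → Fin d → ℕ} {s : Fin d} (ha : ∀ j, a j s < n)
    (j : ℕ) : 0 ≤ normLoc n d a s j ∧ normLoc n d a s j ≤ 1 := by
  have h0 : (0 : ℝ) ≤ locFun n d a j s := by exact_mod_cast locFun_nonneg n d a j s
  have h1 : (locFun n d a j s : ℝ) ≤ (n : ℝ) ^ j := by exact_mod_cast (locFun_lt ha j).le
  have hp : (0 : ℝ) < (n : ℝ) ^ j := by positivity
  exact ⟨div_nonneg h0 hp.le, (div_le_one hp).2 h1⟩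

/-- The possible relations between the normalised locations of two representations of one grid. -/
def Trichotomy (u u' : ℕ → ℝ) : Prop :=
  Tendsto (fun j => |u' j - u j|) atTop (𝓝 0) ∨
  (Tendsto (fun j => |u j|) atTop (𝓝 0) ∧ Tendsto (fun j => |u' j - 1|) atTop (𝓝 0)) ∨
  (Tendsto (fun j => |u j - 1|) atTop (𝓝 0) ∧ Tendsto (fun j => |u' j|) atTop (𝓝 0))

lemma locFun_trichotomy {n d : ℕ} (hn : 2 ≤ n) (hd : 1 ≤ d) {δ δ' : Fin d → ℝ}
    {a a' : ℕ → Fin d → ℕ} {s : Fin d} (ha : ∀ j, a j s < n) (ha' : ∀ j, a' j s < n)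
    (h : GridRep n d δ' a' = GridRep n d δ a) :
    Trichotomy (normLoc n d a s) (normLoc n d a' s) := by
  have hn1 : (1 : ℝ) < n := by exact_mod_cast hn
  -- Generation `0` shows that the shift `c = δ - δ'` is an integer.
  obtain ⟨e₀, he₀⟩ := gridRep_eq_congr hn hd h 0 s
  have hmod : ∀ j, ∃ e : ℤ,
      locFun n d a' j s = locFun n d a j s + (-e₀) + e * (n : ℤ) ^ j := by
    intro j
    obtain ⟨e, he⟩ := gridRep_eq_congr hn hd h j s
    refine ⟨e, ?_⟩
    simp only [locFun, Finset.range_zero, Finset.sum_empty, Int.cast_zero, add_zero, pow_zero,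
      mul_one] at he₀
    have : (locFun n d a' j s : ℝ) = locFun n d a j s + (-e₀) + e * (n : ℝ) ^ j := by
      linarith
    exact_mod_cast this
  have hlim : Tendsto (fun j : ℕ => |(e₀ : ℝ)| / (n : ℝ) ^ j) atTop (𝓝 0) :=
    tendsto_const_nhds.div_atTop (tendsto_pow_atTop_atTop_of_one_lt hn1)
  have squeeze : ∀ w : ℕ → ℝ, (∀ᶠ j in atTop, |w j| ≤ |(e₀ : ℝ)|) →
      Tendsto (fun j => |w j / (n : ℝ) ^ j|) atTop (𝓝 0) := by
    intro w hw
    refine squeeze_zero' (Eventually.of_forall fun _ => abs_nonneg _) ?_ hlim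
    filter_upwards [hw] with j hj
    rw [abs_div, abs_of_pos (show (0 : ℝ) < (n : ℝ) ^ j by positivity)]
    gcongr
  have hb : ∀ j, (0 : ℝ) ≤ locFun n d a j s ∧ (locFun n d a j s : ℝ) ≤ (n : ℝ) ^ j ∧
      (0 : ℝ) ≤ locFun n d a' j s ∧ (locFun n d a' j s : ℝ) ≤ (n : ℝ) ^ j := fun j =>
    ⟨by exact_mod_cast locFun_nonneg n d a j s, by exact_mod_cast (locFun_lt ha j).le,
      by exact_mod_cast locFun_nonneg n d a' j s, by exact_mod_cast (locFun_lt ha' j).le⟩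
  have hsub : ∀ (x : ℝ) (j : ℕ), x / (n : ℝ) ^ j - 1 = (x - (n : ℝ) ^ j) / (n : ℝ) ^ j := by
    intro x j
    rw [sub_div, div_self (by positivity)]
  unfold Trichotomy normLoc
  simp only [hsub, ← sub_div]
  have hle := le_abs_self (e₀ : ℝ)
  have hle' := neg_abs_le (e₀ : ℝ)
  rcases carry_eventually_const hn ha ha' (-e₀) hmod with H | H | H
  · left
    apply squeeze
    filter_upwards [H] with j hj
    have : (locFun n d a' j s : ℝ) = locFun n d a j s + (-e₀) := by exact_mod_cast hj
    rw [this, abs_le]; constructor <;> linarith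
  · right; left
    constructor <;> apply squeeze <;> filter_upwards [H] with j hj <;>
    · have : (locFun n d a' j s : ℝ) = locFun n d a j s + (-e₀) + (n : ℝ) ^ j := by
        exact_mod_cast hj
      obtain ⟨_, _, _, _⟩ := hb j
      rw [abs_le]; constructor <;> linarith
  · right; right
    constructor <;> apply squeeze <;> filter_upwards [H] with j hj <;>
    · have : (locFun n d a' j s : ℝ) = locFun n d a j s + (-e₀) - (n : ℝ) ^ j := by
        exact_mod_cast hj
      obtain ⟨_, _, _, _⟩ := hb j
      rw [abs_le]; constructor <;> linarith

/-! ### Limits inferior and superior of asymptotically equal sequences -/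

/-- The boundedness side conditions for `limsup` and `liminf` of a sequence in `[0, 1]`. -/
lemma unit_bounds {f : ℕ → ℝ} (hf : ∀ j, 0 ≤ f j ∧ f j ≤ 1) :
    IsBoundedUnder (· ≤ ·) atTop f ∧ IsBoundedUnder (· ≥ ·) atTop f ∧
    IsCoboundedUnder (· ≤ ·) atTop f ∧ IsCoboundedUnder (· ≥ ·) atTop f := by
  have h1 : IsBoundedUnder (· ≤ ·) atTop f := isBoundedUnder_of ⟨1, fun j => (hf j).2⟩
  have h2 : IsBoundedUnder (· ≥ ·) atTop f := isBoundedUnder_of ⟨0, fun j => (hf j).1⟩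
  exact ⟨h1, h2, h2.isCoboundedUnder_le, h1.isCoboundedUnder_ge⟩

lemma limsup_le_of_asymp {f g : ℕ → ℝ} (hf : ∀ j, 0 ≤ f j ∧ f j ≤ 1)
    (hg : ∀ j, 0 ≤ g j ∧ g j ≤ 1) (h : Tendsto (fun j => |g j - f j|) atTop (𝓝 0)) :
    limsup f atTop ≤ limsup g atTop := by
  obtain ⟨hg1, -, hg3, -⟩ := unit_bounds hg
  refine le_of_forall_pos_le_add fun ε hε => ?_
  rw [← limsup_add_const atTop g ε hg1 hg3]
  refine limsup_le_limsup ?_ (unit_bounds hf).2.2.1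
    (isBoundedUnder_of ⟨1 + ε, fun j => by linarith [(hg j).2]⟩)
  filter_upwards [h.eventually_lt_const hε] with j hj
  linarith [(abs_lt.1 hj).1]

lemma limsup_eq_of_asymp {f g : ℕ → ℝ} (hf : ∀ j, 0 ≤ f j ∧ f j ≤ 1)
    (hg : ∀ j, 0 ≤ g j ∧ g j ≤ 1) (h : Tendsto (fun j => |g j - f j|) atTop (𝓝 0)) :
    limsup g atTop = limsup f atTop :=
  le_antisymm (limsup_le_of_asymp hg hf (by simpa only [abs_sub_comm] using h))
    (limsup_le_of_asymp hf hg h)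

lemma limsup_one_sub {f : ℕ → ℝ} (hf : ∀ j, 0 ≤ f j ∧ f j ≤ 1) :
    limsup (fun j => 1 - f j) atTop = 1 - liminf f atTop :=
  limsup_const_sub atTop f 1 (unit_bounds hf).2.2.2 (unit_bounds hf).2.1

lemma liminf_one_sub {f : ℕ → ℝ} (hf : ∀ j, 0 ≤ f j ∧ f j ≤ 1) :
    liminf (fun j => 1 - f j) atTop = 1 - limsup f atTop :=
  liminf_const_sub atTop f 1 (unit_bounds hf).1 (unit_bounds hf).2.2.1

lemma liminf_eq_of_asymp {f g : ℕ → ℝ} (hf : ∀ j, 0 ≤ f j ∧ f j ≤ 1)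
    (hg : ∀ j, 0 ≤ g j ∧ g j ≤ 1) (h : Tendsto (fun j => |g j - f j|) atTop (𝓝 0)) :
    liminf g atTop = liminf f atTop := by
  have key := limsup_eq_of_asymp (f := fun j => 1 - f j) (g := fun j => 1 - g j)
    (fun j => ⟨by linarith [hf j], by linarith [hf j]⟩)
    (fun j => ⟨by linarith [hg j], by linarith [hg j]⟩)
    (by
      refine h.congr fun j => ?_
      rw [abs_sub_comm]; congr 1; ring)
  rw [limsup_one_sub hf, limsup_one_sub hg] at key
  linarith

/-! ### Combining two grids -/

/-- The distance of the normalised locations is asymptotically preserved when both or neither of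
the grids wrap around between `0` and `1`, and asymptotically reflected when exactly one does. -/
lemma dist_asymp {u u' v v' : ℕ → ℝ} (hu : ∀ j, 0 ≤ u j ∧ u j ≤ 1)
    (hu' : ∀ j, 0 ≤ u' j ∧ u' j ≤ 1) (hv : ∀ j, 0 ≤ v j ∧ v j ≤ 1)
    (hv' : ∀ j, 0 ≤ v' j ∧ v' j ≤ 1) (H : Trichotomy u u') (K : Trichotomy v v') :
    Tendsto (fun j => |(|u' j - v' j|) - (|u j - v j|)|) atTop (𝓝 0) ∨
    Tendsto (fun j => |(|u' j - v' j|) - (1 - |u j - v j|)|) atTop (𝓝 0) := by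
  have sq : ∀ w b : ℕ → ℝ, Tendsto b atTop (𝓝 0) → (∀ j, |w j| ≤ b j) →
      Tendsto (fun j => |w j|) atTop (𝓝 0) := fun w b hb hw =>
    squeeze_zero (fun _ => abs_nonneg _) hw hb
  rcases H with H | ⟨H₁, H₂⟩ | ⟨H₁, H₂⟩ <;> rcases K with K | ⟨K₁, K₂⟩ | ⟨K₁, K₂⟩
  · left
    refine sq _ _ (by simpa using H.add K) fun j => ?_
    grind
  · right
    refine sq _ _ (by simpa using (H.add K₁).add K₂) fun j => ?_
    grind
  · right
    refine sq _ _ (by simpa using (H.add K₁).add K₂) fun j => ?_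
    grind
  · right
    refine sq _ _ (by simpa using (K.add H₁).add H₂) fun j => ?_
    grind
  · left
    refine sq _ _ (by simpa using (H₁.add H₂).add (K₁.add K₂)) fun j => ?_
    grind
  · left
    refine sq _ _ (by simpa using (H₁.add H₂).add (K₁.add K₂)) fun j => ?_
    grind
  · right
    refine sq _ _ (by simpa using (K.add H₁).add H₂) fun j => ?_
    grind
  · left
    refine sq _ _ (by simpa using (H₁.add H₂).add (K₁.add K₂)) fun j => ?_
    grind
  · left
    refine sq _ _ (by simpa using (H₁.add H₂).add (K₁.add K₂)) fun j => ?_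
    grind

lemma abs_locFun_sub_div (n d : ℕ) (a b : ℕ → Fin d → ℕ) (s : Fin d) (j : ℕ) :
    |(locFun n d a j s : ℝ) - (locFun n d b j s : ℝ)| / (n : ℝ) ^ j =
      |normLoc n d a s j - normLoc n d b s j| := by
  rw [normLoc, normLoc, ← sub_div, abs_div, abs_of_nonneg (by positivity : (0 : ℝ) ≤ (n : ℝ) ^ j)]

/-- Uniformity of the representation in `ℝ^d` (Corollary 2.6): given an adjacent collection
of `d+1` grids and any other representations of the same grids, for each pair of indices and
each coordinate the liminf/limsup pair `(D₁, D₂)` either stays the same or becomes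
`(1 - D₂, 1 - D₁)`. -/
theorem stmt7 (n d : ℕ) (hn : 2 ≤ n) (hd : 1 ≤ d)
    (δ δ' : Fin (d + 1) → Fin d → ℝ) (a a' : Fin (d + 1) → ℕ → Fin d → ℕ)
    (ha : ∀ i j s, a i j s < n) (ha' : ∀ i j s, a' i j s < n)
    (hadj : IsAdjacentFamily n d (d + 1) (fun i => GridRep n d (δ i) (a i)))
    (hrep : ∀ i, GridRep n d (δ' i) (a' i) = GridRep n d (δ i) (a i)) :
    ∀ k₁ k₂ : Fin (d + 1), k₁ ≠ k₂ → ∀ s : Fin d,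
      (Filter.liminf
          (fun j : ℕ => |(locFun n d (a' k₁) j s : ℝ) - (locFun n d (a' k₂) j s : ℝ)| / (n : ℝ) ^ j)
          Filter.atTop =
        Filter.liminf
          (fun j : ℕ => |(locFun n d (a k₁) j s : ℝ) - (locFun n d (a k₂) j s : ℝ)| / (n : ℝ) ^ j)
          Filter.atTop ∧
       Filter.limsup
          (fun j : ℕ => |(locFun n d (a' k₁) j s : ℝ) - (locFun n d (a' k₂) j s : ℝ)| / (n : ℝ) ^ j)
          Filter.atTop =
        Filter.limsup
          (fun j : ℕ => |(locFun n d (a k₁) j s : ℝ) - (locFun n d (a k₂) j s : ℝ)| / (n : ℝ) ^ j)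
          Filter.atTop) ∨
      (Filter.liminf
          (fun j : ℕ => |(locFun n d (a' k₁) j s : ℝ) - (locFun n d (a' k₂) j s : ℝ)| / (n : ℝ) ^ j)
          Filter.atTop =
        1 - Filter.limsup
          (fun j : ℕ => |(locFun n d (a k₁) j s : ℝ) - (locFun n d (a k₂) j s : ℝ)| / (n : ℝ) ^ j)
          Filter.atTop ∧
       Filter.limsup
          (fun j : ℕ => |(locFun n d (a' k₁) j s : ℝ) - (locFun n d (a' k₂) j s : ℝ)| / (n : ℝ) ^ j)
          Filter.atTop =
        1 - Filter.liminf
          (fun j : ℕ => |(locFun n d (a k₁) j s : ℝ) - (locFun n d (a k₂) j s : ℝ)| / (n : ℝ) ^ j)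
          Filter.atTop) := by
  intro k₁ k₂ _ s
  simp only [abs_locFun_sub_div]
  have hu := normLoc_mem hn (fun j => ha k₁ j s)
  have hu' := normLoc_mem hn (fun j => ha' k₁ j s)
  have hv := normLoc_mem hn (fun j => ha k₂ j s)
  have hv' := normLoc_mem hn (fun j => ha' k₂ j s)
  have hdist : ∀ x y : ℝ, 0 ≤ x ∧ x ≤ 1 → 0 ≤ y ∧ y ≤ 1 → 0 ≤ |x - y| ∧ |x - y| ≤ 1 :=
    fun x y hx hy => ⟨abs_nonneg _, abs_le.2 ⟨by linarith, by linarith⟩⟩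
  have hf := fun j => hdist _ _ (hu j) (hv j)
  have hf' := fun j => hdist _ _ (hu' j) (hv' j)
  rcases dist_asymp hu hu' hv hv'
    (locFun_trichotomy hn hd (fun j => ha k₁ j s) (fun j => ha' k₁ j s) (hrep k₁))
    (locFun_trichotomy hn hd (fun j => ha k₂ j s) (fun j => ha' k₂ j s) (hrep k₂)) with h | h
  · exact Or.inl ⟨liminf_eq_of_asymp hf hf' h, limsup_eq_of_asymp hf hf' h⟩
  · have hr : ∀ j, 0 ≤ 1 - |normLoc n d (a k₁) s j - normLoc n d (a k₂) s j| ∧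
        1 - |normLoc n d (a k₁) s j - normLoc n d (a k₂) s j| ≤ 1 :=
      fun j => ⟨by linarith [hf j], by linarith [hf j]⟩
    right
    rw [← liminf_one_sub hf, ← limsup_one_sub hf]
    exact ⟨liminf_eq_of_asymp hr hf' h, limsup_eq_of_asymp hr hf' h⟩
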